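/- arXiv:1805.12490 — 2 statements merged into one kernel-verified Lean document; each statement's English description precedes it below -/
import Mathlib

section
/- Suppose (m,p), (m̃,p̃) are KHK-related for the first Clebsch flow, and (m̃,p̃), (m̿,p̿) are also KHK-related. Then C1(p,p̃)·(m̿1p1 − m1p̿1) + C2(p,p̃)·(m̿2p2 − m2p̿2) + C3(p,p̃)·(m̿3p3 − m3p̿3) = 0; that is, the second order discrete Wronskians Wᵢ⁽²⁾ = m̿ᵢpᵢ − mᵢp̿ᵢ, i = 1,2,3, satisfy a linear relation with coefficients (C1(p,p̃), C2(p,p̃), C3(p,p̃)). -/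
/-- `(m,p)` and `(n,q)` are KHK-related for the first Clebsch flow. -/
def Clebsch1KHK (ε ω1 ω2 ω3 m1 m2 m3 p1 p2 p3 n1 n2 n3 q1 q2 q3 : ℝ) : Prop :=
  n1 - m1 = ε * (ω3 - ω2) * (q2 * p3 + p2 * q3) ∧
  n2 - m2 = ε * (ω1 - ω3) * (q3 * p1 + p3 * q1) ∧
  n3 - m3 = ε * (ω2 - ω1) * (q1 * p2 + p1 * q2) ∧
  q1 - p1 = ε * (n3 * p2 + m3 * q2) - ε * (n2 * p3 + m2 * q3) ∧
  q2 - p2 = ε * (n1 * p3 + m1 * q3) - ε * (n3 * p1 + m3 * q1) ∧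
  q3 - p3 = ε * (n2 * p1 + m2 * q1) - ε * (n1 * p2 + m1 * q2)

def C1 (ε ω1 ω2 ω3 p1 p2 p3 q1 q2 q3 : ℝ) : ℝ :=
  1 + ε ^ 2 * (ω2 - ω1) * p2 * q2 + ε ^ 2 * (ω3 - ω1) * p3 * q3
def C2 (ε ω1 ω2 ω3 p1 p2 p3 q1 q2 q3 : ℝ) : ℝ :=
  1 + ε ^ 2 * (ω1 - ω2) * p1 * q1 + ε ^ 2 * (ω3 - ω2) * p3 * q3
def C3 (ε ω1 ω2 ω3 p1 p2 p3 q1 q2 q3 : ℝ) : ℝ :=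
  1 + ε ^ 2 * (ω1 - ω3) * p1 * q1 + ε ^ 2 * (ω2 - ω3) * p2 * q2

/-- The only solution of `x = ε • (x × n)` is `x = 0`. -/
theorem eq_zero_of_eq_smul_cross {ε n1 n2 n3 x1 x2 x3 : ℝ}
    (h1 : x1 = ε * (n3 * x2 - n2 * x3)) (h2 : x2 = ε * (n1 * x3 - n3 * x1))
    (h3 : x3 = ε * (n2 * x1 - n1 * x2)) : x1 = 0 ∧ x2 = 0 ∧ x3 = 0 := by
  have h : x1 ^ 2 + x2 ^ 2 + x3 ^ 2 = 0 := by
    linear_combination x1 * h1 + x2 * h2 + x3 * h3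
  refine ⟨?_, ?_, ?_⟩ <;> nlinarith [sq_nonneg x1, sq_nonneg x2, sq_nonneg x3]

/-- The second order Wronskian relation multiplied by `ε (q1² + q2² + q3²)`, which vanishes only for
`ε = 0` or `q = 0`. -/
theorem clebsch1_wronskian_relation_mul_normSq
    {ε ω1 ω2 ω3 m1 m2 m3 p1 p2 p3 n1 n2 n3 q1 q2 q3 u1 u2 u3 v1 v2 v3 : ℝ}
    (hK1 : Clebsch1KHK ε ω1 ω2 ω3 m1 m2 m3 p1 p2 p3 n1 n2 n3 q1 q2 q3)
    (hK2 : Clebsch1KHK ε ω1 ω2 ω3 n1 n2 n3 q1 q2 q3 u1 u2 u3 v1 v2 v3) :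
    ε * (q1 ^ 2 + q2 ^ 2 + q3 ^ 2) *
      (C1 ε ω1 ω2 ω3 p1 p2 p3 q1 q2 q3 * (u1 * p1 - m1 * v1)
      + C2 ε ω1 ω2 ω3 p1 p2 p3 q1 q2 q3 * (u2 * p2 - m2 * v2)
      + C3 ε ω1 ω2 ω3 p1 p2 p3 q1 q2 q3 * (u3 * p3 - m3 * v3)) = 0 := by
  obtain ⟨d1, d2, d3, e1, e2, e3⟩ := hK1
  obtain ⟨f1, f2, f3, g1, g2, g3⟩ := hK2
  obtain rfl : m1 = n1 - ε * (ω3 - ω2) * (q2 * p3 + p2 * q3) := by linear_combination -d1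
  obtain rfl : m2 = n2 - ε * (ω1 - ω3) * (q3 * p1 + p3 * q1) := by linear_combination -d2
  obtain rfl : m3 = n3 - ε * (ω2 - ω1) * (q1 * p2 + p1 * q2) := by linear_combination -d3
  obtain rfl : u1 = n1 + ε * (ω3 - ω2) * (v2 * q3 + q2 * v3) := by linear_combination f1
  obtain rfl : u2 = n2 + ε * (ω1 - ω3) * (v3 * q1 + q3 * v1) := by linear_combination f2
  obtain rfl : u3 = n3 + ε * (ω2 - ω1) * (v1 * q2 + q1 * v2) := by linear_combination f3
  simp only [C1, C2, C3]
  linear_combination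
    ((p2 * q3 - p2 * v3 - p3 * q2 + q2 * v3) + ε * (n1 * p1 * q1 - n1 * p1 * v1 + n1 * p2 * v2 -
      2 * n1 * p3 * v3 - n1 * q1 ^ 2 - n1 * q1 * v1 - 2 * n1 * q2 ^ 2 + n1 * q2 * v2 + n2 * p1 *
      q2 - 2 * n2 * p1 * v2 + n2 * q1 * q2 - 2 * n2 * q1 * v2 + n3 * p3 * q1 + n3 * p3 * v1 - n3
      * q1 * q3 - n3 * q3 * v1) + ε ^ 2 * (-(ω1 - ω3) * p1 * q1 * q2 * q3 - (ω3 - ω2) * p1 * q1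
      * q2 * q3 + 2 * (ω1 - ω3) * p1 * q1 * q2 * v3 + 2 * (ω3 - ω2) * p1 * q1 * q2 * v3 - (ω3 -
      ω2) * p1 * q2 * q3 * v1 - (ω1 - ω3) * p2 * q1 ^ 2 * q3 + (ω1 - ω3) * p2 * q1 ^ 2 * v3 +
      (ω3 - ω2) * p2 * q2 ^ 2 * q3 - (ω3 - ω2) * p2 * q2 ^ 2 * v3 - (ω3 - ω2) * p2 * q2 * q3 *
      v2 + (ω3 - ω2) * p3 * q1 ^ 2 * q2 - 2 * (ω3 - ω2) * p3 * q1 ^ 2 * v2 - (ω1 - ω3) * p3 * q1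
      * q2 * v1 - (ω3 - ω2) * p3 * q1 * q2 * v1 + (ω3 - ω2) * p3 * q2 ^ 3 - 2 * (ω3 - ω2) * p3 *
      q2 ^ 2 * v2 - 2 * (ω3 - ω2) * p3 * q3 ^ 2 * v2 + (ω1 - ω3) * q1 ^ 2 * q2 * v3 + (ω1 - ω3)
      * q1 * q2 * q3 * v1 - (ω3 - ω2) * q2 ^ 3 * v3 - (ω3 - ω2) * q2 ^ 2 * q3 * v2)) / 2 * e1
    + ((-p1 * q3 + p1 * v3 + p3 * q1 - q1 * v3) + ε * (n1 * p2 * q1 - 2 * n1 * p2 * v1 + n1 * q1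
      * q2 - 2 * n1 * q2 * v1 + n2 * p1 * v1 + n2 * p2 * q2 - n2 * p2 * v2 - 2 * n2 * p3 * v3 -
      2 * n2 * q1 ^ 2 + n2 * q1 * v1 - n2 * q2 ^ 2 - n2 * q2 * v2 + n3 * p3 * q2 + n3 * p3 * v2
      - n3 * q2 * q3 - n3 * q3 * v2) + ε ^ 2 * ((ω1 - ω3) * p1 * q1 ^ 2 * q3 - (ω1 - ω3) * p1 *
      q1 ^ 2 * v3 - (ω1 - ω3) * p1 * q1 * q3 * v1 - (ω3 - ω2) * p1 * q2 ^ 2 * q3 + (ω3 - ω2) *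
      p1 * q2 ^ 2 * v3 - (ω1 - ω3) * p2 * q1 * q2 * q3 - (ω3 - ω2) * p2 * q1 * q2 * q3 + 2 * (ω1
      - ω3) * p2 * q1 * q2 * v3 + 2 * (ω3 - ω2) * p2 * q1 * q2 * v3 - (ω1 - ω3) * p2 * q1 * q3 *
      v2 + (ω1 - ω3) * p3 * q1 ^ 3 - 2 * (ω1 - ω3) * p3 * q1 ^ 2 * v1 + (ω1 - ω3) * p3 * q1 * q2
      ^ 2 - (ω1 - ω3) * p3 * q1 * q2 * v2 - (ω3 - ω2) * p3 * q1 * q2 * v2 - 2 * (ω1 - ω3) * p3 *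
      q2 ^ 2 * v1 - 2 * (ω1 - ω3) * p3 * q3 ^ 2 * v1 - (ω1 - ω3) * q1 ^ 3 * v3 - (ω1 - ω3) * q1
      ^ 2 * q3 * v1 + (ω3 - ω2) * q1 * q2 ^ 2 * v3 + (ω3 - ω2) * q1 * q2 * q3 * v2)) / 2 * e2
    + ((p1 * q2 + p2 * q1 - 2 * p2 * v1 + q1 * q2 - q1 * v2) + ε * (n1 * p1 * q3 + n1 * p1 * v3
      + n1 * p3 * q1 - 2 * n1 * p3 * v1 + n1 * q1 * q3 - 2 * n1 * q3 * v1 - n2 * p2 * q3 - n2 *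
      p2 * v3 + n2 * p3 * q2 - 2 * n2 * p3 * v2 - n2 * q2 * v3 - 2 * n2 * q3 * v2 - n3 * p1 * q1
      + n3 * p2 * q2 + 2 * n3 * p2 * v2 + n3 * p3 * q3 - n3 * p3 * v3 - 2 * n3 * q1 ^ 2 + n3 *
      q1 * v1 - n3 * q2 ^ 2 + 2 * n3 * q2 * v2 - n3 * q3 ^ 2 - n3 * q3 * v3) + ε ^ 2 * (-(ω1 -
      ω3) * p1 * q1 ^ 2 * q2 - (ω3 - ω2) * p1 * q1 ^ 2 * q2 + 2 * (ω1 - ω3) * p1 * q1 ^ 2 * v2 +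
      2 * (ω3 - ω2) * p1 * q1 ^ 2 * v2 + 2 * (ω1 - ω3) * p1 * q1 * q2 * v1 + 2 * (ω3 - ω2) * p1
      * q1 * q2 * v1 - (ω1 - ω3) * p1 * q2 ^ 3 - (ω3 - ω2) * p1 * q2 ^ 3 + 2 * (ω1 - ω3) * p1 *
      q2 ^ 2 * v2 + 2 * (ω3 - ω2) * p1 * q2 ^ 2 * v2 - (ω1 - ω3) * p1 * q2 * q3 ^ 2 - (ω3 - ω2)
      * p1 * q2 * q3 ^ 2 + (ω3 - ω2) * p1 * q2 * q3 * v3 + 2 * (ω1 - ω3) * p1 * q3 ^ 2 * v2 + 2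
      * (ω3 - ω2) * p1 * q3 ^ 2 * v2 - (ω1 - ω3) * p2 * q1 ^ 3 - (ω3 - ω2) * p2 * q1 ^ 3 + 2 *
      (ω1 - ω3) * p2 * q1 ^ 2 * v1 + 2 * (ω3 - ω2) * p2 * q1 ^ 2 * v1 - (ω1 - ω3) * p2 * q1 * q2
      ^ 2 - (ω3 - ω2) * p2 * q1 * q2 ^ 2 - (ω1 - ω3) * p2 * q1 * q3 ^ 2 - (ω3 - ω2) * p2 * q1 *
      q3 ^ 2 - (ω1 - ω3) * p2 * q1 * q3 * v3 + 2 * (ω3 - ω2) * p2 * q3 ^ 2 * v1 + (ω1 - ω3) * p3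
      * q1 * q2 * v3 + (ω3 - ω2) * p3 * q1 * q2 * v3 + (ω1 - ω3) * q1 ^ 3 * v2 + (ω3 - ω2) * q1
      ^ 3 * v2 + (ω1 - ω3) * q1 ^ 2 * q2 * v1 + (ω3 - ω2) * q1 ^ 2 * q2 * v1 + (ω3 - ω2) * q1 *
      q2 * q3 * v3 + (ω3 - ω2) * q1 * q3 ^ 2 * v2)) / 2 * e3
    + ((-2 * p2 * p3 + 2 * p2 * q3) + ε * (-n1 * p1 ^ 2 + 2 * n1 * p2 * q2 - 2 * n1 * p3 ^ 2 -
      n1 * q1 ^ 2 - n2 * p1 * p2 - n2 * p1 * q2 - n2 * p2 * q1 - n2 * q1 * q2 + n3 * p1 * p3 -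
      n3 * p1 * q3 + n3 * p3 * q1 - n3 * q1 * q3) + ε ^ 2 * (-(ω3 - ω2) * p1 ^ 2 * q2 * q3 + (ω1
      - ω3) * p1 * p2 * q1 * q3 + (ω1 - ω3) * p1 * p3 * q1 * q2 + (ω3 - ω2) * p1 * p3 * q1 * q2
      - (ω3 - ω2) * p1 * q1 * q2 * q3 - 2 * (ω3 - ω2) * p2 ^ 2 * q2 * q3 + 2 * (ω1 - ω3) * p2 *
      p3 * q1 ^ 2 + 2 * (ω3 - ω2) * p2 * p3 * q1 ^ 2 + 2 * (ω3 - ω2) * p2 * p3 * q3 ^ 2 - (ω1 -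
      ω3) * p2 * q1 ^ 2 * q3 + (ω1 - ω3) * p3 * q1 ^ 2 * q2 + (ω3 - ω2) * p3 * q1 ^ 2 * q2)) / 2
      * g1
    + ((-p3 * q1 + q1 * q3) + ε * (n1 * p1 * p2 + n1 * p1 * q2 - 2 * n2 * p1 ^ 2 - n2 * p1 * q1
      - n2 * p2 ^ 2 - 2 * n2 * p3 ^ 2 - n2 * q1 ^ 2 - n2 * q2 ^ 2 + n3 * p2 * p3 - n3 * p2 * q3
      + n3 * p3 * q2 - n3 * q2 * q3) + ε ^ 2 * (-(ω3 - ω2) * p1 * p2 * q2 * q3 + 2 * (ω1 - ω3) *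
      p1 * p3 * q1 ^ 2 + 2 * (ω1 - ω3) * p1 * p3 * q2 ^ 2 + 2 * (ω1 - ω3) * p1 * p3 * q3 ^ 2 +
      (ω1 - ω3) * p1 * q1 ^ 2 * q3 - (ω3 - ω2) * p1 * q2 ^ 2 * q3 - (ω1 - ω3) * p2 ^ 2 * q1 * q3
      + (ω1 - ω3) * p2 * p3 * q1 * q2 + (ω3 - ω2) * p2 * p3 * q1 * q2 - (ω1 - ω3) * p2 * q1 * q2
      * q3 - (ω3 - ω2) * p2 * q1 * q2 * q3 + (ω1 - ω3) * p3 * q1 ^ 3 + (ω1 - ω3) * p3 * q1 * q2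
      ^ 2)) / 2 * g2
    + (ε * (-n3 * p1 ^ 2 - n3 * p2 ^ 2 - n3 * p3 ^ 2 - n3 * q1 ^ 2 - n3 * q2 ^ 2 - n3 * q3 ^ 2)
      + ε ^ 2 * ((ω1 - ω3) * p1 ^ 2 * q1 * q2 + (ω3 - ω2) * p1 ^ 2 * q1 * q2 - (ω1 - ω3) * p1 *
      p2 * q1 ^ 2 - (ω3 - ω2) * p1 * p2 * q1 ^ 2 - (ω1 - ω3) * p1 * p2 * q2 ^ 2 - (ω3 - ω2) * p1
      * p2 * q2 ^ 2 - (ω1 - ω3) * p1 * p2 * q3 ^ 2 - (ω3 - ω2) * p1 * p2 * q3 ^ 2 - (ω1 - ω3) *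
      p1 * q1 ^ 2 * q2 - (ω3 - ω2) * p1 * q1 ^ 2 * q2 - (ω1 - ω3) * p1 * q2 ^ 3 - (ω3 - ω2) * p1
      * q2 ^ 3 - (ω1 - ω3) * p1 * q2 * q3 ^ 2 - (ω3 - ω2) * p1 * q2 * q3 ^ 2 + (ω1 - ω3) * p2 ^
      2 * q1 * q2 + (ω3 - ω2) * p2 ^ 2 * q1 * q2 - (ω1 - ω3) * p2 * q1 ^ 3 - (ω3 - ω2) * p2 * q1
      ^ 3 - (ω1 - ω3) * p2 * q1 * q2 ^ 2 - (ω3 - ω2) * p2 * q1 * q2 ^ 2 - (ω1 - ω3) * p2 * q1 *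
      q3 ^ 2 - (ω3 - ω2) * p2 * q1 * q3 ^ 2 + (ω1 - ω3) * p3 ^ 2 * q1 * q2 + (ω3 - ω2) * p3 ^ 2
      * q1 * q2)) / 2 * g3

/-- Second order discrete Wronskians HK basis for the first Clebsch flow (Theorem 12):
`C₁(p,p̃)(m̿₁p₁−m₁p̿₁) + C₂(p,p̃)(m̿₂p₂−m₂p̿₂) + C₃(p,p̃)(m̿₃p₃−m₃p̿₃) = 0`. -/
theorem clebsch1_second_order_wronskian_basis
    (ε ω1 ω2 ω3 m1 m2 m3 p1 p2 p3 n1 n2 n3 q1 q2 q3 u1 u2 u3 v1 v2 v3 : ℝ)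
    (hK1 : Clebsch1KHK ε ω1 ω2 ω3 m1 m2 m3 p1 p2 p3 n1 n2 n3 q1 q2 q3)
    (hK2 : Clebsch1KHK ε ω1 ω2 ω3 n1 n2 n3 q1 q2 q3 u1 u2 u3 v1 v2 v3) :
    C1 ε ω1 ω2 ω3 p1 p2 p3 q1 q2 q3 * (u1 * p1 - m1 * v1)
    + C2 ε ω1 ω2 ω3 p1 p2 p3 q1 q2 q3 * (u2 * p2 - m2 * v2)
    + C3 ε ω1 ω2 ω3 p1 p2 p3 q1 q2 q3 * (u3 * p3 - m3 * v3) = 0 := by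
  rcases eq_or_ne ε 0 with rfl | hε
  · obtain ⟨d1, d2, d3, e1, e2, e3⟩ := hK1
    obtain ⟨f1, f2, f3, g1, g2, g3⟩ := hK2
    simp only [zero_mul, sub_self, sub_eq_zero] at d1 d2 d3 e1 e2 e3 f1 f2 f3 g1 g2 g3
    subst_vars
    ring
  by_cases hq : q1 ^ 2 + q2 ^ 2 + q3 ^ 2 = 0
  · obtain rfl : q1 = 0 := by nlinarith [sq_nonneg q1, sq_nonneg q2, sq_nonneg q3]
    obtain rfl : q2 = 0 := by nlinarith [sq_nonneg q2, sq_nonneg q3]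
    obtain rfl : q3 = 0 := by nlinarith [sq_nonneg q3]
    obtain ⟨d1, d2, d3, e1, e2, e3⟩ := hK1
    obtain ⟨-, -, -, g1, g2, g3⟩ := hK2
    obtain ⟨rfl, rfl, rfl⟩ : p1 = 0 ∧ p2 = 0 ∧ p3 = 0 :=
      eq_zero_of_eq_smul_cross (ε := -ε) (n1 := n1) (n2 := n2) (n3 := n3)
        (by linear_combination -e1) (by linear_combination -e2) (by linear_combination -e3)
    obtain ⟨rfl, rfl, rfl⟩ : v1 = 0 ∧ v2 = 0 ∧ v3 = 0 :=
      eq_zero_of_eq_smul_cross (ε := ε) (n1 := n1) (n2 := n2) (n3 := n3)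
        (by linear_combination g1) (by linear_combination g2) (by linear_combination g3)
    ring
  · exact (mul_eq_zero.mp (clebsch1_wronskian_relation_mul_normSq hK1 hK2)).resolve_left
      (mul_ne_zero hε hq)
end

section
/- Suppose (m,p), (m̃,p̃) are KHK-related for the first Clebsch flow, and (m̃,p̃), (m̿,p̿) are also KHK-related. Assume c0(p) ≠ 0, c0(p̃) ≠ 0, C0(p,p̃) ≠ 0 and C0(p̃,p̿) ≠ 0, where c0(p) = p1²+p2²+p3² and C0(p,p̃) = p1p̃1+p2p̃2+p3p̃3. Then the function K(m,p) = ∑_{i=1}^{3} (Cᵢ(p,p̃)/C0(p,p̃))·(mᵢpᵢ/c0(p)) is an integral of motion: ∑_{i=1}^{3} (Cᵢ(p,p̃)/C0(p,p̃))·(mᵢpᵢ/c0(p)) = ∑_{i=1}^{3} (Cᵢ(p̃,p̿)/C0(p̃,p̿))·(m̃ᵢp̃ᵢ/c0(p̃)). -/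
def C0 (p1 p2 p3 q1 q2 q3 : ℝ) : ℝ := p1 * q1 + p2 * q2 + p3 * q3
def c0 (p1 p2 p3 : ℝ) : ℝ := p1 ^ 2 + p2 ^ 2 + p3 ^ 2

/-- The numerator of the integral at a point, divided by `c0`, agrees with the same expression
at its image, with the roles of the two points exchanged. -/
lemma Clebsch1KHK.numerator_symm
    {ε ω1 ω2 ω3 m1 m2 m3 p1 p2 p3 n1 n2 n3 q1 q2 q3 : ℝ}
    (h : Clebsch1KHK ε ω1 ω2 ω3 m1 m2 m3 p1 p2 p3 n1 n2 n3 q1 q2 q3) (hc : c0 p1 p2 p3 ≠ 0) :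
    (C1 ε ω1 ω2 ω3 p1 p2 p3 q1 q2 q3 * (m1 * p1) + C2 ε ω1 ω2 ω3 p1 p2 p3 q1 q2 q3 * (m2 * p2)
      + C3 ε ω1 ω2 ω3 p1 p2 p3 q1 q2 q3 * (m3 * p3)) * c0 q1 q2 q3
    = (C1 ε ω1 ω2 ω3 p1 p2 p3 q1 q2 q3 * (n1 * q1) + C2 ε ω1 ω2 ω3 p1 p2 p3 q1 q2 q3 * (n2 * q2)
      + C3 ε ω1 ω2 ω3 p1 p2 p3 q1 q2 q3 * (n3 * q3)) * c0 p1 p2 p3 := by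
  obtain ⟨h1, h2, h3, h4, h5, h6⟩ := h
  rw [sub_eq_iff_eq_add] at h1 h2 h3
  subst h1 h2 h3
  rcases eq_or_ne ε 0 with rfl | hε
  · have e1 : q1 = p1 := by linarith
    have e2 : q2 = p2 := by linarith
    have e3 : q3 = p3 := by linarith
    subst e1 e2 e3
    ring
  have he : (p1 + q1) ^ 2 + (p2 + q2) ^ 2 + (p3 + q3) ^ 2 ≠ 0 := by
    intro he
    have e1 : q1 = -p1 := by
      nlinarith [sq_nonneg (p1 + q1), sq_nonneg (p2 + q2), sq_nonneg (p3 + q3)]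
    have e2 : q2 = -p2 := by
      nlinarith [sq_nonneg (p1 + q1), sq_nonneg (p2 + q2), sq_nonneg (p3 + q3)]
    have e3 : q3 = -p3 := by
      nlinarith [sq_nonneg (p1 + q1), sq_nonneg (p2 + q2), sq_nonneg (p3 + q3)]
    subst e1 e2 e3
    apply hc
    simp only [c0]
    linear_combination -(p1 * h4 + p2 * h5 + p3 * h6) / 2
  apply mul_left_cancel₀ (mul_ne_zero hε he)
  simp only [c0, C1, C2, C3] at *
  linear_combination
      ((p1 * q1 + p2 * q2 + p3 * q3) * (ε * ((p1 + q1) * m1 + (p2 + q2) * m2 + (p3 + q3) * m3)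
          + ε ^ 2 * (ω1 * p1 * (p2 * q3 - p3 * q2) + ω2 * p2 * (p3 * q1 - p1 * q3)
          + ω3 * p3 * (p1 * q2 - p2 * q1))) * (p1 + q1)
        - ((p2 + q2) * ((1 + ε ^ 2 * (ω1 - ω3) * p1 * q1
          + ε ^ 2 * (ω2 - ω3) * p2 * q2) * (p3 * (q1 ^ 2 + q2 ^ 2 + q3 ^ 2) - q3 * (p1 ^ 2
          + p2 ^ 2 + p3 ^ 2))) - (p3 + q3) * ((1 + ε ^ 2 * (ω1 - ω2) * p1 * q1
          + ε ^ 2 * (ω3 - ω2) * p3 * q3) * (p2 * (q1 ^ 2 + q2 ^ 2 + q3 ^ 2) - q2 * (p1 ^ 2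
          + p2 ^ 2 + p3 ^ 2))))) * h4
      + ((p1 * q1 + p2 * q2 + p3 * q3) * (ε * ((p1 + q1) * m1 + (p2 + q2) * m2 + (p3 + q3) * m3)
          + ε ^ 2 * (ω1 * p1 * (p2 * q3 - p3 * q2) + ω2 * p2 * (p3 * q1 - p1 * q3)
          + ω3 * p3 * (p1 * q2 - p2 * q1))) * (p2 + q2)
        - ((p3 + q3) * ((1 + ε ^ 2 * (ω2 - ω1) * p2 * q2
          + ε ^ 2 * (ω3 - ω1) * p3 * q3) * (p1 * (q1 ^ 2 + q2 ^ 2 + q3 ^ 2) - q1 * (p1 ^ 2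
          + p2 ^ 2 + p3 ^ 2))) - (p1 + q1) * ((1 + ε ^ 2 * (ω1 - ω3) * p1 * q1
          + ε ^ 2 * (ω2 - ω3) * p2 * q2) * (p3 * (q1 ^ 2 + q2 ^ 2 + q3 ^ 2) - q3 * (p1 ^ 2
          + p2 ^ 2 + p3 ^ 2))))) * h5
      + ((p1 * q1 + p2 * q2 + p3 * q3) * (ε * ((p1 + q1) * m1 + (p2 + q2) * m2 + (p3 + q3) * m3)
          + ε ^ 2 * (ω1 * p1 * (p2 * q3 - p3 * q2) + ω2 * p2 * (p3 * q1 - p1 * q3)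
          + ω3 * p3 * (p1 * q2 - p2 * q1))) * (p3 + q3)
        - ((p1 + q1) * ((1 + ε ^ 2 * (ω1 - ω2) * p1 * q1
          + ε ^ 2 * (ω3 - ω2) * p3 * q3) * (p2 * (q1 ^ 2 + q2 ^ 2 + q3 ^ 2) - q2 * (p1 ^ 2
          + p2 ^ 2 + p3 ^ 2))) - (p2 + q2) * ((1 + ε ^ 2 * (ω2 - ω1) * p2 * q2
          + ε ^ 2 * (ω3 - ω1) * p3 * q3) * (p1 * (q1 ^ 2 + q2 ^ 2 + q3 ^ 2) - q1 * (p1 ^ 2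
          + p2 ^ 2 + p3 ^ 2))))) * h6

/-- The ratio of `1 + ε² ∑ ωᵢ pᵢ p̃ᵢ` to `C0 p p̃` is preserved along the discrete flow. -/
lemma Clebsch1KHK.ratio_eq
    {ε ω1 ω2 ω3 m1 m2 m3 p1 p2 p3 n1 n2 n3 q1 q2 q3 u1 u2 u3 v1 v2 v3 : ℝ}
    (h : Clebsch1KHK ε ω1 ω2 ω3 m1 m2 m3 p1 p2 p3 n1 n2 n3 q1 q2 q3)
    (h' : Clebsch1KHK ε ω1 ω2 ω3 n1 n2 n3 q1 q2 q3 u1 u2 u3 v1 v2 v3) :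
    (1 + ε ^ 2 * (ω1 * p1 * q1 + ω2 * p2 * q2 + ω3 * p3 * q3)) * C0 q1 q2 q3 v1 v2 v3
    = (1 + ε ^ 2 * (ω1 * q1 * v1 + ω2 * q2 * v2 + ω3 * q3 * v3)) * C0 p1 p2 p3 q1 q2 q3 := by
  obtain ⟨h1, h2, h3, h4, h5, h6⟩ := h
  obtain ⟨k1, k2, k3, k4, k5, k6⟩ := h'
  rw [sub_eq_iff_eq_add] at k1 k2 k3
  rw [sub_eq_iff_eq_add', ← sub_eq_iff_eq_add] at h1 h2 h3
  subst h1 h2 h3 k1 k2 k3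
  simp only [C0]
  linear_combination
    ((q1 + v1) * h4 + (q2 + v2) * h5 + (q3 + v3) * h6
      + (p1 + q1) * k4 + (p2 + q2) * k5 + (p3 + q3) * k6) / 2

/-- Corollary 1: `K(m,p) = ∑ (Cᵢ/C₀)(mᵢpᵢ/c₀)` is an integral of motion of the KHK
discretization of the first Clebsch flow. -/
theorem clebsch1_K_integral
    (ε ω1 ω2 ω3 m1 m2 m3 p1 p2 p3 n1 n2 n3 q1 q2 q3 u1 u2 u3 v1 v2 v3 : ℝ)
    (hK1 : Clebsch1KHK ε ω1 ω2 ω3 m1 m2 m3 p1 p2 p3 n1 n2 n3 q1 q2 q3)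
    (hK2 : Clebsch1KHK ε ω1 ω2 ω3 n1 n2 n3 q1 q2 q3 u1 u2 u3 v1 v2 v3)
    (hc0 : c0 p1 p2 p3 ≠ 0) (hc0' : c0 q1 q2 q3 ≠ 0)
    (hC0 : C0 p1 p2 p3 q1 q2 q3 ≠ 0) (hC0' : C0 q1 q2 q3 v1 v2 v3 ≠ 0) :
    (C1 ε ω1 ω2 ω3 p1 p2 p3 q1 q2 q3 / C0 p1 p2 p3 q1 q2 q3) * (m1 * p1 / c0 p1 p2 p3)
    + (C2 ε ω1 ω2 ω3 p1 p2 p3 q1 q2 q3 / C0 p1 p2 p3 q1 q2 q3) * (m2 * p2 / c0 p1 p2 p3)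
    + (C3 ε ω1 ω2 ω3 p1 p2 p3 q1 q2 q3 / C0 p1 p2 p3 q1 q2 q3) * (m3 * p3 / c0 p1 p2 p3)
    = (C1 ε ω1 ω2 ω3 q1 q2 q3 v1 v2 v3 / C0 q1 q2 q3 v1 v2 v3) * (n1 * q1 / c0 q1 q2 q3)
    + (C2 ε ω1 ω2 ω3 q1 q2 q3 v1 v2 v3 / C0 q1 q2 q3 v1 v2 v3) * (n2 * q2 / c0 q1 q2 q3)
    + (C3 ε ω1 ω2 ω3 q1 q2 q3 v1 v2 v3 / C0 q1 q2 q3 v1 v2 v3) * (n3 * q3 / c0 q1 q2 q3) := by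
  have hs := hK1.numerator_symm hc0
  have hr := hK1.ratio_eq hK2
  have hn : (C1 ε ω1 ω2 ω3 p1 p2 p3 q1 q2 q3 * (n1 * q1)
        + C2 ε ω1 ω2 ω3 p1 p2 p3 q1 q2 q3 * (n2 * q2)
        + C3 ε ω1 ω2 ω3 p1 p2 p3 q1 q2 q3 * (n3 * q3)) * C0 q1 q2 q3 v1 v2 v3
      = (C1 ε ω1 ω2 ω3 q1 q2 q3 v1 v2 v3 * (n1 * q1)
        + C2 ε ω1 ω2 ω3 q1 q2 q3 v1 v2 v3 * (n2 * q2)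
        + C3 ε ω1 ω2 ω3 q1 q2 q3 v1 v2 v3 * (n3 * q3)) * C0 p1 p2 p3 q1 q2 q3 := by
    simp only [C0, C1, C2, C3] at hr ⊢
    linear_combination (n1 * q1 + n2 * q2 + n3 * q3) * hr
  simp only [div_mul_div_comm, ← add_div]
  rw [div_eq_div_iff (mul_ne_zero hC0 hc0) (mul_ne_zero hC0' hc0')]
  linear_combination C0 q1 q2 q3 v1 v2 v3 * hs + c0 p1 p2 p3 * hn
end
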